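/- arXiv:2605.28374 — 12 statements merged into one kernel-verified Lean document; each statement's English description precedes it below -/
import Mathlib

section
/- For every real n×n hierarchy matrix A with columns a_1,…,a_n such that the denominator Σ_{i=1}^n w_i · (a_iᵀ C^(i) a_i) is strictly positive, the weighted variance satisfies the global-score bound: (Σ_{i=1}^n w_i · Var_i) · (Σ_{i=1}^n w_i · a_iᵀ C^(i) a_i) ≥ (Σ_{i=1}^n w_i · a_iᵀ b^(i))². -/
open Finset

/-- **Global-score bound (general hierarchy matrix).**
For every real `n × n` hierarchy matrix `A` with columns `a_i = (A j i)_j` such that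
the denominator `∑ i, w i * (a_iᵀ C^(i) a_i)` is strictly positive, the weighted variance
satisfies `(∑ i, w i * Var i) * (∑ i, w i * a_iᵀ C^(i) a_i) ≥ (∑ i, w i * a_iᵀ b^(i))²`. -/
theorem global_score_bound
    {X : Type*} [Fintype X] {n : ℕ}
    (p : Fin n → X → ℝ)
    (hp : ∀ i x, 0 < p i x)
    (hpsum : ∀ i, ∑ x : X, p i x = 1)
    (w : Fin n → ℝ) (hw : ∀ i, 0 ≤ w i)
    (h : X → ℝ) (g : Fin n → X → ℝ)
    (A : Matrix (Fin n) (Fin n) ℝ)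
    (E : Fin n → ℝ) (hE : ∀ i, E i = ∑ x : X, p i x * h x)
    (V : Fin n → ℝ) (hV : ∀ i, V i = ∑ x : X, p i x * (h x - E i) ^ 2)
    (C : Fin n → Matrix (Fin n) (Fin n) ℝ)
    (hC : ∀ i j k, C i j k = ∑ x : X, g j x * g k x / p i x)
    (b : Fin n → Fin n → ℝ)
    (hb : ∀ i j, b i j = ∑ x : X, g j x * (h x - E i))
    (hD : 0 < ∑ i, w i * ∑ j, ∑ k, A j i * C i j k * A k i) :
    (∑ i, w i * ∑ j, A j i * b i j) ^ 2 ≤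
      (∑ i, w i * V i) * (∑ i, w i * ∑ j, ∑ k, A j i * C i j k * A k i) := by
  have h1 : ∀ i, ∑ j, A j i * b i j = ∑ x : X, (∑ j, A j i * g j x) * (h x - E i) := by
    intro i
    simp only [hb, Finset.mul_sum, Finset.sum_mul]
    rw [Finset.sum_comm]
    refine Finset.sum_congr rfl fun x _ => Finset.sum_congr rfl fun j _ => ?_
    ring
  have h2 : ∀ i, ∑ j, ∑ k, A j i * C i j k * A k i
      = ∑ x : X, (∑ j, A j i * g j x) ^ 2 / p i x := by
    intro i
    have e : ∀ x, (∑ j, A j i * g j x) ^ 2 / p i x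
        = ∑ j, ∑ k, A j i * (g j x * g k x / p i x) * A k i := by
      intro x
      rw [sq, Finset.sum_mul_sum, Finset.sum_div]
      refine Finset.sum_congr rfl fun j _ => ?_
      rw [Finset.sum_div]
      refine Finset.sum_congr rfl fun k _ => ?_
      ring
    simp only [e, hC, Finset.mul_sum, Finset.sum_mul]
    symm
    rw [Finset.sum_comm]
    refine Finset.sum_congr rfl fun j _ => ?_
    rw [Finset.sum_comm]
  have h3 : ∀ (f : X → ℝ) (i : Fin n), w i * ∑ x, f x = ∑ x, w i * f x :=
    fun f i => Finset.mul_sum _ _ _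
  simp only [h1, h2, hV, h3]
  simp only [← Fintype.sum_prod_type']
  apply Finset.sum_sq_le_sum_mul_sum_of_sq_le_mul
  · rintro ⟨i, x⟩ _
    exact mul_nonneg (hw i) (mul_nonneg (hp i x).le (sq_nonneg _))
  · rintro ⟨i, x⟩ _
    exact mul_nonneg (hw i) (div_nonneg (sq_nonneg _) (hp i x).le)
  · rintro ⟨i, x⟩ _
    apply le_of_eq
    have := (hp i x).ne'
    field_simp
end

section
/- Let M be a nonzero real symmetric positive semidefinite k×k matrix and μ ∈ ℝ^k such that μ is NOT in the range of M. Then the generalized Rayleigh quotient is unbounded above: for every K ∈ ℝ there exists x ∈ ℝ^k with xᵀ M x > 0 and (μᵀ x)² > K · (xᵀ M x). -/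
open Matrix

/-- **Divergent case of the Rayleigh quotient maximization.**
Let `M` be a nonzero real symmetric positive semidefinite `k × k` matrix and `μ` a vector
not in the range of `M`.  Then the generalized Rayleigh quotient `(μᵀ x)² / (xᵀ M x)` is
unbounded above: for every `K` there is `x` with `xᵀ M x > 0` and `(μᵀ x)² > K * (xᵀ M x)`. -/
theorem rayleigh_quotient_unbounded
    {k : ℕ} (M : Matrix (Fin k) (Fin k) ℝ) (hM : M.PosSemidef) (hM0 : M ≠ 0)
    (μ : Fin k → ℝ) (hμ : ¬ ∃ v : Fin k → ℝ, M.mulVec v = μ) :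
    ∀ K : ℝ, ∃ x : Fin k → ℝ, 0 < x ⬝ᵥ M.mulVec x ∧
      K * (x ⬝ᵥ M.mulVec x) < (μ ⬝ᵥ x) ^ 2 := by
  intro K
  have hT : Mᵀ = M := by
    have h := hM.isHermitian.eq
    rwa [conjTranspose_eq_transpose_of_trivial] at h
  have hsym : ∀ a b : Fin k → ℝ, a ⬝ᵥ M.mulVec b = b ⬝ᵥ M.mulVec a := by
    intro a b
    rw [dotProduct_mulVec, ← mulVec_transpose, hT, dotProduct_comm]
  -- a kernel vector not orthogonal to the given vector
  obtain ⟨z, hz, hzμ⟩ : ∃ z : Fin k → ℝ, M.mulVec z = 0 ∧ μ ⬝ᵥ z ≠ 0 := by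
    have hmem : μ ∉ LinearMap.range M.mulVecLin := by
      rintro ⟨v, hv⟩
      exact hμ ⟨v, by simpa using hv⟩
    obtain ⟨f, hf, hle⟩ := Submodule.exists_le_ker_of_notMem hmem
    have hfz : ∀ v : Fin k → ℝ, f v = v ⬝ᵥ (fun i => f (Pi.single i 1)) := by
      intro v
      rw [LinearMap.pi_apply_eq_sum_univ f v]
      simp only [dotProduct, smul_eq_mul]
      refine Finset.sum_congr rfl fun i _ => ?_
      congr 2
      ext j
      simp [Pi.single_apply, eq_comm]
    refine ⟨fun i => f (Pi.single i 1), ?_, ?_⟩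
    · apply dotProduct_eq_zero
      intro v
      rw [dotProduct_comm, hsym, dotProduct_comm, ← hfz]
      exact hle ⟨v, by simp⟩
    · rwa [← hfz]
  obtain ⟨y, hy⟩ : ∃ y : Fin k → ℝ, 0 < y ⬝ᵥ M.mulVec y := by
    by_contra! hcon
    have h0 : ∀ y : Fin k → ℝ, y ⬝ᵥ M.mulVec y = 0 := fun y =>
      le_antisymm (hcon y) (by simpa using hM.dotProduct_mulVec_nonneg y)
    apply hM0
    ext i j
    have h1 := h0 (Pi.single i 1 + Pi.single j 1)
    rw [mulVec_add, add_dotProduct, dotProduct_add, dotProduct_add, h0, h0,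
      hsym (Pi.single j 1)] at h1
    have h2 : (Pi.single i 1 : Fin k → ℝ) ⬝ᵥ M.mulVec (Pi.single j 1) = 0 := by linarith
    simpa using h2
  set q := y ⬝ᵥ M.mulVec y with hq
  set t := (|K * q| + 1 - μ ⬝ᵥ y) / (μ ⬝ᵥ z) with ht
  have hx : (y + t • z) ⬝ᵥ M.mulVec (y + t • z) = q := by
    rw [mulVec_add, mulVec_smul, hz, smul_zero, add_zero, add_dotProduct, smul_dotProduct,
      hsym z y, hz]
    simp [hq]
  have hm : μ ⬝ᵥ (y + t • z) = |K * q| + 1 := by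
    rw [dotProduct_add, dotProduct_smul, smul_eq_mul, ht, div_mul_cancel₀ _ hzμ]
    ring
  refine ⟨y + t • z, by rw [hx]; exact hy, ?_⟩
  rw [hx, hm]
  nlinarith [le_abs_self (K * q), abs_nonneg (K * q)]
end

section
/- Define the weighted quantities b_w = Σ_{i=1}^n w_i · b^(i) ∈ ℝ^n and C_w = Σ_{i=1}^n w_i · C^(i) ∈ ℝ^{n×n}, and let u ∈ ℝ^n be any vector with C_w u = b_w. Then the weighted variance satisfies the global Barankin bound: Σ_{i=1}^n w_i · Var_i ≥ b_wᵀ u. -/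
open Finset Matrix

/-- **Global Barankin bound.**
With `b_w = ∑ i, w i • b^(i)` and `C_w = ∑ i, w i • C^(i)`, for any `u` with `C_w u = b_w`,
the weighted variance satisfies `∑ i, w i * Var i ≥ b_wᵀ u`. -/
theorem global_barankin_bound
    {X : Type*} [Fintype X] {n : ℕ}
    (p : Fin n → X → ℝ)
    (hp : ∀ i x, 0 < p i x)
    (hpsum : ∀ i, ∑ x : X, p i x = 1)
    (w : Fin n → ℝ) (hw : ∀ i, 0 ≤ w i)
    (h : X → ℝ) (g : Fin n → X → ℝ)
    (E : Fin n → ℝ) (hE : ∀ i, E i = ∑ x : X, p i x * h x)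
    (V : Fin n → ℝ) (hV : ∀ i, V i = ∑ x : X, p i x * (h x - E i) ^ 2)
    (C : Fin n → Matrix (Fin n) (Fin n) ℝ)
    (hC : ∀ i j k, C i j k = ∑ x : X, g j x * g k x / p i x)
    (b : Fin n → Fin n → ℝ)
    (hb : ∀ i j, b i j = ∑ x : X, g j x * (h x - E i))
    (bw : Fin n → ℝ) (hbw : bw = ∑ i, w i • b i)
    (Cw : Matrix (Fin n) (Fin n) ℝ) (hCw : Cw = ∑ i, w i • C i)
    (u : Fin n → ℝ) (hu : Cw.mulVec u = bw) :
    bw ⬝ᵥ u ≤ ∑ i, w i * V i := by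
  have hbu : ∀ i, b i ⬝ᵥ u = ∑ x : X, (∑ j, u j * g j x) * (h x - E i) := by
    intro i
    simp only [dotProduct, hb, Finset.sum_mul]
    rw [Finset.sum_comm]
    refine Finset.sum_congr rfl fun x _ => Finset.sum_congr rfl fun j _ => ?_
    ring
  have hCu : ∀ i, (C i).mulVec u ⬝ᵥ u = ∑ x : X, (∑ j, u j * g j x) ^ 2 / p i x := by
    intro i
    have h1 : ∀ x, (∑ j, u j * g j x) ^ 2 / p i x
        = ∑ j, ∑ k, g j x * g k x / p i x * u k * u j := by
      intro x
      rw [sq, Finset.sum_mul_sum, Finset.sum_div]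
      refine Finset.sum_congr rfl fun j _ => ?_
      rw [Finset.sum_div]
      refine Finset.sum_congr rfl fun k _ => ?_
      ring
    simp only [h1, dotProduct, mulVec, hC, Finset.sum_mul]
    rw [Finset.sum_comm (s := (Finset.univ : Finset X))]
    refine Finset.sum_congr rfl fun j _ => ?_
    rw [Finset.sum_comm]
  have key : ∀ i, 0 ≤ V i - 2 * (b i ⬝ᵥ u) + (C i).mulVec u ⬝ᵥ u := by
    intro i
    have : V i - 2 * (b i ⬝ᵥ u) + (C i).mulVec u ⬝ᵥ u
        = ∑ x : X, p i x * ((h x - E i) - (∑ j, u j * g j x) / p i x) ^ 2 := by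
      rw [hV, hbu, hCu, Finset.mul_sum, ← Finset.sum_sub_distrib, ← Finset.sum_add_distrib]
      refine Finset.sum_congr rfl fun x _ => ?_
      have := (hp i x).ne'
      field_simp
      ring
    rw [this]
    exact Finset.sum_nonneg fun x _ => mul_nonneg (hp i x).le (sq_nonneg _)
  have e1 : bw ⬝ᵥ u = ∑ i, w i * (b i ⬝ᵥ u) := by
    rw [hbw, sum_dotProduct]
    simp [smul_dotProduct]
  have e2 : bw ⬝ᵥ u = ∑ i, w i * ((C i).mulVec u ⬝ᵥ u) := by
    rw [← hu, hCw, Matrix.sum_mulVec, sum_dotProduct]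
    simp [smul_dotProduct, Matrix.smul_mulVec]
  have tot : 0 ≤ ∑ i, w i * (V i - 2 * (b i ⬝ᵥ u) + (C i).mulVec u ⬝ᵥ u) :=
    Finset.sum_nonneg fun i _ => mul_nonneg (hw i) (key i)
  have e3 : ∑ i, w i * (V i - 2 * (b i ⬝ᵥ u) + (C i).mulVec u ⬝ᵥ u)
      = ∑ i, w i * V i - 2 * ∑ i, w i * (b i ⬝ᵥ u) + ∑ i, w i * ((C i).mulVec u ⬝ᵥ u) := by
    rw [Finset.mul_sum, ← Finset.sum_sub_distrib, ← Finset.sum_add_distrib]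
    refine Finset.sum_congr rfl fun i _ => ?_
    ring
  rw [e3, ← e1, ← e2] at tot
  linarith
end

section
/- For each i ∈ {1,…,n} let v^(i) ∈ ℝ^n be any vector with C^(i) v^(i) = b^(i) (such vectors exist because b^(i) lies in the range of C^(i)). Then the weighted variance satisfies the fully global bound: Σ_{i=1}^n w_i · Var_i ≥ Σ_{i=1}^n w_i · (b^(i)ᵀ v^(i)). -/
open Finset Matrix

/-- **Fully global bound.**
For each `i` let `v^(i)` be any vector with `C^(i) v^(i) = b^(i)`.  Then the weighted
variance satisfies `∑ i, w i * Var i ≥ ∑ i, w i * (b^(i)ᵀ v^(i))`. -/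
theorem fully_global_bound
    {X : Type*} [Fintype X] {n : ℕ}
    (p : Fin n → X → ℝ)
    (hp : ∀ i x, 0 < p i x)
    (hpsum : ∀ i, ∑ x : X, p i x = 1)
    (w : Fin n → ℝ) (hw : ∀ i, 0 ≤ w i)
    (h : X → ℝ) (g : Fin n → X → ℝ)
    (E : Fin n → ℝ) (hE : ∀ i, E i = ∑ x : X, p i x * h x)
    (V : Fin n → ℝ) (hV : ∀ i, V i = ∑ x : X, p i x * (h x - E i) ^ 2)
    (C : Fin n → Matrix (Fin n) (Fin n) ℝ)
    (hC : ∀ i j k, C i j k = ∑ x : X, g j x * g k x / p i x)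
    (b : Fin n → Fin n → ℝ)
    (hb : ∀ i j, b i j = ∑ x : X, g j x * (h x - E i))
    (v : Fin n → Fin n → ℝ)
    (hv : ∀ i, (C i).mulVec (v i) = b i) :
    ∑ i, w i * (b i ⬝ᵥ v i) ≤ ∑ i, w i * V i := by
  refine Finset.sum_le_sum fun i _ => mul_le_mul_of_nonneg_left ?_ (hw i)
  have h1 : b i ⬝ᵥ v i = ∑ x : X, (∑ j, v i j * g j x) * (h x - E i) := by
    simp only [dotProduct, hb, Finset.sum_mul]
    rw [Finset.sum_comm]
    exact Finset.sum_congr rfl fun x _ => Finset.sum_congr rfl fun j _ => by ring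
  have h2 : b i ⬝ᵥ v i = ∑ x : X, (∑ j, v i j * g j x) ^ 2 / p i x := by
    have e : ∀ x, (∑ j, v i j * g j x) ^ 2 / p i x
        = ∑ j, ∑ k, (g j x * g k x / p i x) * v i k * v i j := by
      intro x
      rw [sq, Finset.sum_mul_sum, Finset.sum_div]
      refine Finset.sum_congr rfl fun j _ => ?_
      rw [Finset.sum_div]
      exact Finset.sum_congr rfl fun k _ => by ring
    rw [← hv i]
    simp only [e, dotProduct, mulVec, hC, Finset.sum_mul]
    rw [Finset.sum_comm (s := (Finset.univ : Finset X))]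
    refine Finset.sum_congr rfl fun j _ => ?_
    rw [Finset.sum_comm]
  have h3 : 0 ≤ ∑ x : X, p i x * (h x - E i - (∑ j, v i j * g j x) / p i x) ^ 2 :=
    Finset.sum_nonneg fun x _ => mul_nonneg (hp i x).le (sq_nonneg _)
  have h4 : ∑ x : X, p i x * (h x - E i - (∑ j, v i j * g j x) / p i x) ^ 2
      = V i - 2 * (b i ⬝ᵥ v i) + b i ⬝ᵥ v i := by
    nth_rewrite 2 [h2]
    rw [h1, hV, Finset.mul_sum, ← Finset.sum_sub_distrib, ← Finset.sum_add_distrib]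
    refine Finset.sum_congr rfl fun x _ => ?_
    have := (hp i x).ne'
    field_simp
    ring
  linarith
end

section
/- Let C_1,…,C_n be real symmetric positive semidefinite k×k matrices, w_1,…,w_n ≥ 0, and b_1,…,b_n ∈ ℝ^k with each b_i in the range of C_i, say C_i v_i = b_i. Set b_w = Σ_i w_i b_i and C_w = Σ_i w_i C_i, and let u ∈ ℝ^k satisfy C_w u = b_w. Then Σ_{i=1}^n w_i · (b_iᵀ v_i) ≥ b_wᵀ u; that is, the fully global level dominates the global Barankin level. -/
open Finset Matrix

/-- **The fully global level dominates the global Barankin level.**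
Let `C_1,…,C_n` be real symmetric positive semidefinite `k × k` matrices, `w_i ≥ 0`, and
`b_i` in the range of `C_i`, say `C_i v_i = b_i`.  With `b_w = ∑ i, w i • b i` and
`C_w = ∑ i, w i • C i`, for any `u` with `C_w u = b_w` one has
`∑ i, w i * (b_iᵀ v_i) ≥ b_wᵀ u`. -/
theorem fully_global_dominates_barankin
    {n k : ℕ}
    (C : Fin n → Matrix (Fin k) (Fin k) ℝ)
    (hC : ∀ i, (C i).PosSemidef)
    (w : Fin n → ℝ) (hw : ∀ i, 0 ≤ w i)
    (b v : Fin n → Fin k → ℝ)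
    (hv : ∀ i, (C i).mulVec (v i) = b i)
    (bw : Fin k → ℝ) (hbw : bw = ∑ i, w i • b i)
    (Cw : Matrix (Fin k) (Fin k) ℝ) (hCw : Cw = ∑ i, w i • C i)
    (u : Fin k → ℝ) (hu : Cw.mulVec u = bw) :
    bw ⬝ᵥ u ≤ ∑ i, w i * (b i ⬝ᵥ v i) := by
  have key : ∀ i, 2 * (b i ⬝ᵥ u) - u ⬝ᵥ (C i *ᵥ u) ≤ b i ⬝ᵥ v i := by
    intro i
    have h := (hC i).dotProduct_mulVec_nonneg (v i - u)
    have hT : (C i)ᵀ = C i := by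
      simpa [Matrix.IsHermitian, Matrix.conjTranspose_eq_transpose_of_trivial] using (hC i).1
    have hs : v i ⬝ᵥ (C i *ᵥ u) = b i ⬝ᵥ u := by
      rw [Matrix.dotProduct_mulVec, ← Matrix.mulVec_transpose, hT, hv]
    rw [star_trivial, Matrix.mulVec_sub, sub_dotProduct, dotProduct_sub, dotProduct_sub, hs, hv,
      dotProduct_comm (v i) (b i), dotProduct_comm u (b i)] at h
    linarith
  have h1 : bw ⬝ᵥ u = ∑ i, w i * (b i ⬝ᵥ u) := by
    rw [hbw, sum_dotProduct]
    simp only [smul_dotProduct, smul_eq_mul]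
  have h2 : bw ⬝ᵥ u = ∑ i, w i * (u ⬝ᵥ (C i *ᵥ u)) := by
    rw [← hu, hCw, Matrix.sum_mulVec, dotProduct_comm, dotProduct_sum]
    simp only [Matrix.smul_mulVec, dotProduct_smul, smul_eq_mul]
  have h3 : bw ⬝ᵥ u = ∑ i, w i * (2 * (b i ⬝ᵥ u) - u ⬝ᵥ (C i *ᵥ u)) := by
    have : ∑ i, w i * (2 * (b i ⬝ᵥ u) - u ⬝ᵥ (C i *ᵥ u))
        = 2 * ∑ i, w i * (b i ⬝ᵥ u) - ∑ i, w i * (u ⬝ᵥ (C i *ᵥ u)) := by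
      rw [Finset.mul_sum, ← Finset.sum_sub_distrib]
      exact Finset.sum_congr rfl fun i _ => by ring
    rw [this, ← h1, ← h2]
    ring
  rw [h3]
  exact Finset.sum_le_sum fun i _ => mul_le_mul_of_nonneg_left (key i) (hw i)
end

section
/- Suppose that for each i with w_i ≠ 0 there exists a vector u^(i) ∈ ℝ^n such that C^(i) u^(i) = b^(i) and, for every outcome x ∈ X, g(x)ᵀ u^(i) = p_i(x) · (h(x) − E_i), where g(x) = (g_1(x),…,g_n(x)). Then the fully global bound is saturated with equality: Σ_{i=1}^n w_i · Var_i = Σ_{i=1}^n w_i · (b^(i)ᵀ u^(i)). -/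
open Finset Matrix

/-- **Saturation of the fully global bound.**
Suppose that for each `i` with `w i ≠ 0` the vector `u^(i)` satisfies `C^(i) u^(i) = b^(i)`
and the outcome-space saturation equations `g(x)ᵀ u^(i) = p_i(x) (h(x) − E_i)` for all `x`.
Then `∑ i, w i * Var i = ∑ i, w i * (b^(i)ᵀ u^(i))`. -/
theorem fully_global_bound_saturation
    {X : Type*} [Fintype X] {n : ℕ}
    (p : Fin n → X → ℝ)
    (hp : ∀ i x, 0 < p i x)
    (hpsum : ∀ i, ∑ x : X, p i x = 1)
    (w : Fin n → ℝ) (hw : ∀ i, 0 ≤ w i)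
    (h : X → ℝ) (g : Fin n → X → ℝ)
    (E : Fin n → ℝ) (hE : ∀ i, E i = ∑ x : X, p i x * h x)
    (V : Fin n → ℝ) (hV : ∀ i, V i = ∑ x : X, p i x * (h x - E i) ^ 2)
    (C : Fin n → Matrix (Fin n) (Fin n) ℝ)
    (hC : ∀ i j k, C i j k = ∑ x : X, g j x * g k x / p i x)
    (b : Fin n → Fin n → ℝ)
    (hb : ∀ i j, b i j = ∑ x : X, g j x * (h x - E i))
    (u : Fin n → Fin n → ℝ)
    (hu : ∀ i, w i ≠ 0 → (C i).mulVec (u i) = b i)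
    (hsat : ∀ i, w i ≠ 0 → ∀ x : X,
      (fun j => g j x) ⬝ᵥ u i = p i x * (h x - E i)) :
    ∑ i, w i * V i = ∑ i, w i * (b i ⬝ᵥ u i) := by
  refine Finset.sum_congr rfl fun i _ => ?_
  by_cases hi : w i = 0
  · simp [hi]
  congr 1
  rw [hV]
  simp only [dotProduct, hb, Finset.sum_mul]
  rw [Finset.sum_comm]
  refine Finset.sum_congr rfl fun x _ => ?_
  have hx := hsat i hi x
  simp only [dotProduct] at hx
  calc p i x * (h x - E i) ^ 2 = (p i x * (h x - E i)) * (h x - E i) := by ring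
    _ = _ := by
      rw [← hx, Finset.sum_mul]
      exact Finset.sum_congr rfl fun j _ => by ring
end

section
/- Let X be a finite set, let p_j, p_k, p_n : X → ℝ be functions with p_n(x) > 0 for all x, let q_j, q_k : X → ℝ be arbitrary functions, and let m ≥ 2 be an integer. For a tuple x⃗ = (x_1,…,x_m) ∈ X^m define G_j(x⃗) = Σ_{r=1}^m q_j(x_r) · Π_{s ≠ r} p_j(x_s), and similarly G_k. Set Λ = Σ_x p_j(x)p_k(x)/p_n(x), R_{jk} = Σ_x q_j(x)p_k(x)/p_n(x), R_{kj} = Σ_x q_k(x)p_j(x)/p_n(x), and C_{jk} = Σ_x q_j(x)q_k(x)/p_n(x). Then Σ_{x⃗ ∈ X^m} G_j(x⃗)·G_k(x⃗) / Π_{r=1}^m p_n(x_r) = m(m−1)·Λ^{m−2}·R_{jk}·R_{kj} + m·Λ^{m−1}·C_{jk}. -/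
open Finset

theorem multishot_aux_prod {X : Type*} {m : ℕ} (q p : X → ℝ) (xs : Fin m → X) (r : Fin m) :
    q (xs r) * ∏ s ∈ Finset.univ.erase r, p (xs s)
      = ∏ s : Fin m, (if s = r then q (xs s) else p (xs s)) := by
  rw [← Finset.mul_prod_erase Finset.univ _ (Finset.mem_univ r), if_pos rfl]
  congr 1
  refine Finset.prod_congr rfl fun s hs => ?_
  rw [if_neg (Finset.ne_of_mem_erase hs)]

/-- **Multi-shot information matrix decomposition.**
With `G_j(x⃗) = ∑ r, q_j(x_r) ∏_{s ≠ r} p_j(x_s)` (the θ-derivative of the `m`-fold product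
distribution), `Λ = ∑ x, p_j p_k / p_n`, `R_{jk} = ∑ x, q_j p_k / p_n`,
`R_{kj} = ∑ x, q_k p_j / p_n`, and `C_{jk} = ∑ x, q_j q_k / p_n`, one has
`∑_{x⃗} G_j(x⃗) G_k(x⃗) / ∏ r, p_n(x_r) = m(m−1) Λ^{m−2} R_{jk} R_{kj} + m Λ^{m−1} C_{jk}`. -/
theorem multishot_information_decomposition
    {X : Type*} [Fintype X]
    (pj pk pn : X → ℝ) (hpn : ∀ x, 0 < pn x)
    (qj qk : X → ℝ)
    (m : ℕ) (hm : 2 ≤ m)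
    (Λ Rjk Rkj Cjk : ℝ)
    (hΛ : Λ = ∑ x : X, pj x * pk x / pn x)
    (hRjk : Rjk = ∑ x : X, qj x * pk x / pn x)
    (hRkj : Rkj = ∑ x : X, qk x * pj x / pn x)
    (hCjk : Cjk = ∑ x : X, qj x * qk x / pn x) :
    ∑ xs : Fin m → X,
        (∑ r : Fin m, qj (xs r) * ∏ s ∈ Finset.univ.erase r, pj (xs s)) *
          (∑ r : Fin m, qk (xs r) * ∏ s ∈ Finset.univ.erase r, pk (xs s)) /
          ∏ r : Fin m, pn (xs r)
      = (m : ℝ) * ((m : ℝ) - 1) * Λ ^ (m - 2) * Rjk * Rkj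
        + (m : ℝ) * Λ ^ (m - 1) * Cjk := by
  have key : ∀ r t : Fin m,
      ∑ xs : Fin m → X, (qj (xs r) * ∏ s ∈ Finset.univ.erase r, pj (xs s)) *
          (qk (xs t) * ∏ s ∈ Finset.univ.erase t, pk (xs s)) / ∏ r : Fin m, pn (xs r)
      = if t = r then Λ ^ (m - 1) * Cjk else Λ ^ (m - 2) * Rjk * Rkj := by
    intro r t
    have h1 : ∀ xs : Fin m → X, (qj (xs r) * ∏ s ∈ Finset.univ.erase r, pj (xs s)) *
          (qk (xs t) * ∏ s ∈ Finset.univ.erase t, pk (xs s)) / ∏ r : Fin m, pn (xs r)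
        = ∏ s : Fin m, ((if s = r then qj (xs s) else pj (xs s)) *
            (if s = t then qk (xs s) else pk (xs s)) / pn (xs s)) := by
      intro xs
      rw [multishot_aux_prod, multishot_aux_prod, ← Finset.prod_mul_distrib,
        ← Finset.prod_div_distrib]
    rw [Finset.sum_congr rfl fun xs _ => h1 xs,
      ← Fintype.prod_sum (fun (s : Fin m) (x : X) => (if s = r then qj x else pj x) *
            (if s = t then qk x else pk x) / pn x)]
    rw [← Finset.mul_prod_erase Finset.univ _ (Finset.mem_univ r)]
    by_cases h : t = r
    · rw [show (if t = r then Λ ^ (m - 1) * Cjk else Λ ^ (m - 2) * Rjk * Rkj) = _ from if_pos h]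
      subst h
      have h2 : ∀ s ∈ Finset.univ.erase t, (∑ x : X, (if s = t then qj x else pj x) *
            (if s = t then qk x else pk x) / pn x) = Λ := by
        intro s hs
        simp [Finset.ne_of_mem_erase hs, hΛ]
      rw [Finset.prod_congr rfl h2]
      simp [Finset.card_erase_of_mem, ← hCjk, mul_comm]
    · rw [show (if t = r then Λ ^ (m - 1) * Cjk else Λ ^ (m - 2) * Rjk * Rkj) = _ from if_neg h]
      have ht : t ∈ Finset.univ.erase r := by simp [h]
      rw [← Finset.mul_prod_erase _ _ ht]
      have h2 : ∀ s ∈ (Finset.univ.erase r).erase t, (∑ x : X, (if s = r then qj x else pj x) *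
            (if s = t then qk x else pk x) / pn x) = Λ := by
        intro s hs
        simp only [Finset.mem_erase] at hs
        simp [hs.1, hs.2.1, hΛ]
      rw [Finset.prod_congr rfl h2, Finset.prod_const, Finset.card_erase_of_mem ht,
        Finset.card_erase_of_mem (Finset.mem_univ r), Finset.card_fin, Nat.sub_sub]
      have h3 : ∑ x : X, pj x * qk x / pn x = Rkj := by
        rw [hRkj]
        exact Finset.sum_congr rfl fun x _ => by rw [mul_comm]
      simp only [if_true, if_neg h, if_neg (Ne.symm h : ¬ r = t), h3, ← hRjk]
      ring
  simp_rw [Finset.sum_mul_sum, Finset.sum_div]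
  rw [Finset.sum_comm]
  simp_rw [Finset.sum_comm (s := (Finset.univ : Finset (Fin m → X))), key]
  have h4 : ∀ r : Fin m, (∑ t : Fin m, if t = r then Λ ^ (m - 1) * Cjk
      else Λ ^ (m - 2) * Rjk * Rkj)
      = Λ ^ (m - 1) * Cjk + ((m : ℝ) - 1) * (Λ ^ (m - 2) * Rjk * Rkj) := by
    intro r
    rw [← Finset.add_sum_erase Finset.univ _ (Finset.mem_univ r), if_pos rfl,
      Finset.sum_congr rfl fun t ht => if_neg (Finset.ne_of_mem_erase ht), Finset.sum_const,
      Finset.card_erase_of_mem (Finset.mem_univ r), Finset.card_fin, nsmul_eq_mul,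
      Nat.cast_sub (by omega), Nat.cast_one]
  rw [Finset.sum_congr rfl fun r _ => h4 r, Finset.sum_const, Finset.card_fin, nsmul_eq_mul]
  ring
end

section
/- Fix reals f_1,…,f_n ∈ (−1,1) and c_1,…,c_n ∈ ℝ, an index i, and an integer m ≥ 2. On the binary outcome set X = {+1,−1} let p_j(x) = (1 + x·f_j)/2, and for x⃗ ∈ X^m define G_j(x⃗) = Σ_{r=1}^m (x_r·c_j/2) · Π_{s ≠ r} p_j(x_s). Then for all j, k: Σ_{x⃗ ∈ X^m} G_j(x⃗)·G_k(x⃗)/Π_{r=1}^m p_i(x_r) = m·(1+Δ)^{m−2}·(1+mΔ) · c_j·c_k/(1−f_i²), where Δ = (f_j−f_i)(f_k−f_i)/(1−f_i²). In particular 1+Δ > 0, and for m = 1 the left-hand side (with G_j(x) = x·c_j/2) equals c_j·c_k/(1−f_i²). -/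
open Finset

lemma prod_two_point {m : ℕ} (D V W U : ℝ) (r t : Fin m) :
    (∏ s : Fin m, (if s = r then (if s = t then D else V) else (if s = t then W else U)))
      = if t = r then D * U ^ (m - 1) else V * W * U ^ (m - 2) := by
  rw [← Finset.mul_prod_erase univ _ (mem_univ r)]
  by_cases h : t = r
  · rw [if_pos h]
    subst h
    simp only [if_true]
    congr 1
    rw [Finset.prod_congr rfl (g := fun _ => U)]
    · simp
    · intro s hs
      simp [Finset.ne_of_mem_erase hs]
  · rw [if_neg h]
    have ht : t ∈ univ.erase r := by simp [h]
    rw [← Finset.mul_prod_erase _ _ ht]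
    have hrt : ¬ r = t := fun e => h e.symm
    rw [Finset.prod_congr rfl (g := fun _ => U)]
    · simp only [if_true, h, hrt, if_false, Finset.prod_const]
      rw [Finset.card_erase_of_mem ht, Finset.card_erase_of_mem (mem_univ r)]
      simp only [Finset.card_univ, Fintype.card_fin, Nat.sub_sub]
      ring
    · intro s hs
      have h1 := Finset.ne_of_mem_erase hs
      have h2 := Finset.ne_of_mem_erase (Finset.mem_of_mem_erase hs)
      simp [h1, h2]

lemma mul_prod_erase_eq {m : ℕ} (a P : Bool → ℝ) (xs : Fin m → Bool) (r : Fin m) :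
    a (xs r) * ∏ s ∈ univ.erase r, P (xs s)
      = ∏ s, (if s = r then a (xs s) else P (xs s)) := by
  rw [← Finset.mul_prod_erase univ _ (mem_univ r)]
  simp only [if_true]
  congr 1
  apply Finset.prod_congr rfl
  intro s hs
  simp [Finset.ne_of_mem_erase hs]

lemma general_sum {m : ℕ} (hm : 2 ≤ m) (a b P Q w : Bool → ℝ) :
    ∑ xs : Fin m → Bool,
      (∑ r, a (xs r) * ∏ s ∈ univ.erase r, P (xs s)) *
      (∑ r, b (xs r) * ∏ s ∈ univ.erase r, Q (xs s)) / ∏ r, w (xs r)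
    = m * ((∑ x, a x * b x / w x) * (∑ x, P x * Q x / w x) ^ (m - 1) +
       ((m : ℝ) - 1) * ((∑ x, a x * Q x / w x) * (∑ x, P x * b x / w x) *
         (∑ x, P x * Q x / w x) ^ (m - 2))) := by
  have key : ∀ r t : Fin m, (∑ xs : Fin m → Bool,
      (a (xs r) * ∏ s ∈ univ.erase r, P (xs s)) *
      (b (xs t) * ∏ s ∈ univ.erase t, Q (xs s)) / ∏ r, w (xs r)) =
      if t = r then (∑ x, a x * b x / w x) * (∑ x, P x * Q x / w x) ^ (m - 1) else
        (∑ x, a x * Q x / w x) * (∑ x, P x * b x / w x) *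
         (∑ x, P x * Q x / w x) ^ (m - 2) := by
    intro r t
    rw [← prod_two_point]
    simp only [mul_prod_erase_eq, ← Finset.prod_mul_distrib, ← Finset.prod_div_distrib]
    rw [← Fintype.prod_sum (fun (s : Fin m) (x : Bool) =>
      (if s = r then a x else P x) * (if s = t then b x else Q x) / w x)]
    apply Finset.prod_congr rfl
    intro s _
    split_ifs <;> rfl
  simp only [Finset.sum_mul_sum (univ : Finset (Fin m)), Finset.sum_div]
  rw [Finset.sum_comm]
  have : ∀ r : Fin m, (∑ xs : Fin m → Bool, ∑ t : Fin m,
      (a (xs r) * ∏ s ∈ univ.erase r, P (xs s)) *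
      (b (xs t) * ∏ s ∈ univ.erase t, Q (xs s)) / ∏ r, w (xs r)) =
      ((∑ x, a x * b x / w x) * (∑ x, P x * Q x / w x) ^ (m - 1) +
       ((m : ℝ) - 1) * ((∑ x, a x * Q x / w x) * (∑ x, P x * b x / w x) *
         (∑ x, P x * Q x / w x) ^ (m - 2))) := by
    intro r
    rw [Finset.sum_comm]
    simp only [key]
    rw [← Finset.add_sum_erase univ _ (mem_univ r)]
    simp only [if_true]
    congr 1
    rw [Finset.sum_congr rfl (g := fun _ => (∑ x, a x * Q x / w x) * (∑ x, P x * b x / w x) *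
         (∑ x, P x * Q x / w x) ^ (m - 2))]
    · rw [Finset.sum_const, Finset.card_erase_of_mem (mem_univ r), nsmul_eq_mul]
      simp only [Finset.card_univ, Fintype.card_fin]
      rw [Nat.cast_sub (by omega)]
      simp
    · intro s hs
      simp [Finset.ne_of_mem_erase hs]
  rw [Finset.sum_congr rfl (fun r _ => this r)]
  rw [Finset.sum_const, nsmul_eq_mul, Finset.card_univ, Fintype.card_fin]

/-- **m-repetition information matrix for the two-outcome model.**
On the binary outcome set `{+1,−1}` (encoded by `Bool` via `sgn`), with
`p_j(x) = (1 + x f_j)/2` and `G_j(x⃗) = ∑ r, (x_r c_j/2) ∏_{s ≠ r} p_j(x_s)`, for all `j, k`: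
`∑_{x⃗} G_j G_k / ∏ r p_i(x_r) = m (1+Δ)^{m−2} (1+mΔ) · c_j c_k/(1−f_i²)` with
`Δ = (f_j−f_i)(f_k−f_i)/(1−f_i²)`; moreover `1+Δ > 0`, and the single-shot information
equals `c_j c_k/(1−f_i²)`. -/
theorem binary_model_information_matrix
    {n : ℕ}
    (f c : Fin n → ℝ)
    (hf : ∀ j, -1 < f j ∧ f j < 1)
    (i : Fin n)
    (m : ℕ) (hm : 2 ≤ m)
    (sgn : Bool → ℝ) (hsgn : sgn = fun b => if b then 1 else -1) :
    ∀ j k : Fin n,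
      0 < 1 + (f j - f i) * (f k - f i) / (1 - f i ^ 2) ∧
      (∑ xs : Fin m → Bool,
          (∑ r : Fin m, sgn (xs r) * c j / 2 *
              ∏ s ∈ Finset.univ.erase r, (1 + sgn (xs s) * f j) / 2) *
            (∑ r : Fin m, sgn (xs r) * c k / 2 *
              ∏ s ∈ Finset.univ.erase r, (1 + sgn (xs s) * f k) / 2) /
            ∏ r : Fin m, (1 + sgn (xs r) * f i) / 2
        = (m : ℝ) * (1 + (f j - f i) * (f k - f i) / (1 - f i ^ 2)) ^ (m - 2) *
            (1 + (m : ℝ) * ((f j - f i) * (f k - f i) / (1 - f i ^ 2))) *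
            (c j * c k / (1 - f i ^ 2))) ∧
      (∑ x : Bool,
          (sgn x * c j / 2) * (sgn x * c k / 2) / ((1 + sgn x * f i) / 2)
        = c j * c k / (1 - f i ^ 2)) := by
  intro j k
  obtain ⟨hi1, hi2⟩ := hf i
  obtain ⟨hj1, hj2⟩ := hf j
  obtain ⟨hk1, hk2⟩ := hf k
  have hA : 0 < 1 + f i := by linarith
  have hB : 0 < 1 - f i := by linarith
  have hA' := hA.ne'
  have hB' := hB.ne'
  have hC : 0 < 1 - f i ^ 2 := by nlinarith
  have hC' := hC.ne'
  have hfac : 1 - f i ^ 2 = (1 + f i) * (1 - f i) := by ring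
  have hB2 : 1 + -f i ≠ 0 := by rwa [← sub_eq_add_neg]
  refine ⟨?_, ?_, ?_⟩
  · have e : 1 + (f j - f i) * (f k - f i) / (1 - f i ^ 2)
        = ((1 - f i) * ((1 + f j) * (1 + f k)) + (1 + f i) * ((1 - f j) * (1 - f k)))
          / (2 * (1 - f i ^ 2)) := by
      field_simp
      ring
    rw [e]
    have h1 : 0 < 1 + f j := by linarith
    have h2 : 0 < 1 + f k := by linarith
    have h3 : 0 < 1 - f j := by linarith
    have h4 : 0 < 1 - f k := by linarith
    positivity
  · have g := general_sum hm (fun x => sgn x * c j / 2) (fun x => sgn x * c k / 2)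
      (fun x => (1 + sgn x * f j) / 2) (fun x => (1 + sgn x * f k) / 2)
      (fun x => (1 + sgn x * f i) / 2)
    rw [g]
    have e1 : ∑ x, sgn x * c j / 2 * (sgn x * c k / 2) / ((1 + sgn x * f i) / 2)
        = c j * c k / (1 - f i ^ 2) := by
      subst hsgn
      simp [hfac, ← sub_eq_add_neg]
      field_simp
      ring
    have e2 : ∑ x, (1 + sgn x * f j) / 2 * ((1 + sgn x * f k) / 2) / ((1 + sgn x * f i) / 2)
        = 1 + (f j - f i) * (f k - f i) / (1 - f i ^ 2) := by
      subst hsgn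
      simp [hfac, ← sub_eq_add_neg]
      field_simp
      ring
    have e3 : ∑ x, sgn x * c j / 2 * ((1 + sgn x * f k) / 2) / ((1 + sgn x * f i) / 2)
        = c j * (f k - f i) / (1 - f i ^ 2) := by
      subst hsgn
      simp [hfac, ← sub_eq_add_neg]
      field_simp
      ring
    have e4 : ∑ x, (1 + sgn x * f j) / 2 * (sgn x * c k / 2) / ((1 + sgn x * f i) / 2)
        = c k * (f j - f i) / (1 - f i ^ 2) := by
      subst hsgn
      simp [hfac, ← sub_eq_add_neg]
      field_simp
      ring
    rw [e1, e2, e3, e4]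
    have hp : m - 1 = (m - 2) + 1 := by omega
    rw [hp, pow_succ]
    generalize hU : (1 + (f j - f i) * (f k - f i) / (1 - f i ^ 2)) ^ (m - 2) = U
    ring
  · subst hsgn
    simp [hfac, ← sub_eq_add_neg]
    field_simp
    ring
end

section
/- Let ρ be a positive-definite Hermitian d×d complex matrix, G a Hermitian d×d complex matrix, and L the unique Hermitian d×d matrix satisfying ρL + Lρ = 2G. Let E_1,…,E_N be positive semidefinite Hermitian d×d matrices with Σ_x E_x = I (a POVM). Then Σ_{x : E_x ≠ 0} (Tr[E_x G])² / Tr[E_x ρ] ≤ Tr[G L], where each trace Tr[E_x G] is real and Tr[E_x ρ] > 0 whenever E_x ≠ 0. -/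
open Finset Matrix
open scoped ComplexOrder

open scoped MatrixOrder Matrix.Norms.L2Operator in
theorem aux_factor {d : ℕ} {A : Matrix (Fin d) (Fin d) ℂ} (hA : A.PosSemidef) :
    ∃ C : Matrix (Fin d) (Fin d) ℂ, A = Cᴴ * C :=
  CStarAlgebra.nonneg_iff_eq_star_mul_self.mp hA.nonneg

theorem aux_trace {d : ℕ} (C D : Matrix (Fin d) (Fin d) ℂ) :
    (Cᴴ * C * (Dᴴ * D)).trace = ((C * Dᴴ) * (C * Dᴴ)ᴴ).trace := by
  rw [Matrix.conjTranspose_mul, Matrix.conjTranspose_conjTranspose, Matrix.mul_assoc,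
    Matrix.trace_mul_comm]
  simp only [Matrix.mul_assoc]

theorem aux_nonneg {d : ℕ} {A B : Matrix (Fin d) (Fin d) ℂ} (hA : A.PosSemidef)
    (hB : B.PosSemidef) : 0 ≤ (A * B).trace := by
  obtain ⟨C, rfl⟩ := aux_factor hA
  obtain ⟨D, rfl⟩ := aux_factor hB
  rw [aux_trace]
  exact (Matrix.posSemidef_self_mul_conjTranspose _).trace_nonneg

theorem aux_pos {d : ℕ} {A B : Matrix (Fin d) (Fin d) ℂ} (hA : A.PosSemidef)
    (hB : B.PosDef) (h : A ≠ 0) : 0 < (A * B).trace := by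
  refine lt_of_le_of_ne (aux_nonneg hA hB.posSemidef) fun h0 => h ?_
  obtain ⟨C, rfl⟩ := aux_factor hA
  obtain ⟨D, rfl⟩ := aux_factor hB.posSemidef
  rw [aux_trace] at h0
  have h1 := Matrix.trace_mul_conjTranspose_self_eq_zero_iff.mp h0.symm
  have h2 : C * (Dᴴ * D) = 0 * (Dᴴ * D) := by rw [← Matrix.mul_assoc, h1]; simp
  have h3 := hB.isUnit.mul_right_cancel h2
  simp [h3]

/-- **Measurement optimization step: classical score term bounded by the quantum one.**
Let `ρ` be positive definite Hermitian, `G` Hermitian, and `L` the Hermitian solution of the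
Lyapunov equation `ρL + Lρ = 2G` (the generalized SLD).  For any POVM `E_1,…,E_N`
(positive semidefinite with `∑ x, E x = 1`), each `Tr[E_x G]` is real, `Tr[E_x ρ] > 0`
whenever `E_x ≠ 0`, and `∑_{x : E_x ≠ 0} (Tr[E_x G])² / Tr[E_x ρ] ≤ Tr[G L]`. -/
theorem quantum_score_bound
    {d N : ℕ}
    (ρ G L : Matrix (Fin d) (Fin d) ℂ)
    (hρ : ρ.PosDef) (hG : G.IsHermitian) (hL : L.IsHermitian)
    (hLyap : ρ * L + L * ρ = (2 : ℂ) • G)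
    (E : Fin N → Matrix (Fin d) (Fin d) ℂ)
    (hE : ∀ x, (E x).PosSemidef)
    (hsum : ∑ x, E x = 1)
    [DecidablePred fun x : Fin N => E x ≠ 0] :
    (∀ x, ((E x * G).trace).im = 0) ∧
    (∀ x, E x ≠ 0 → 0 < ((E x * ρ).trace).re) ∧
    (∑ x ∈ Finset.univ.filter (fun x : Fin N => E x ≠ 0),
        (((E x * G).trace).re) ^ 2 / ((E x * ρ).trace).re
      ≤ ((G * L).trace).re) := by
  have hpos : ∀ x, E x ≠ 0 → 0 < ((E x * ρ).trace).re := fun x hx =>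
    (Complex.pos_iff.mp (aux_pos (hE x) hρ hx)).1
  have hq : ∀ x, 0 ≤ ((E x * (L * ρ * L)).trace).re := fun x => by
    have h1 : (L * ρ * L).PosSemidef := by
      have := hρ.posSemidef.mul_mul_conjTranspose_same L
      rwa [hL.eq] at this
    exact (Complex.nonneg_iff.mp (aux_nonneg (hE x) h1)).1
  have hquad : ∀ x (t : ℝ), 0 ≤ ((E x * (L * ρ * L)).trace).re
      - 2 * t * ((E x * G).trace).re + t ^ 2 * ((E x * ρ).trace).re := fun x t => by
    have h1 : ((L - (t : ℂ) • 1) * ρ * (L - (t : ℂ) • 1)).PosSemidef := by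
      have := hρ.posSemidef.mul_mul_conjTranspose_same (L - (t : ℂ) • 1)
      rw [Matrix.conjTranspose_sub, hL.eq, Matrix.conjTranspose_smul] at this
      simpa using this
    have h2 := (Complex.nonneg_iff.mp (aux_nonneg (hE x) h1)).1
    have h3 : (L - (t : ℂ) • 1) * ρ * (L - (t : ℂ) • 1)
        = L * ρ * L - (t : ℂ) • ((2 : ℂ) • G) + ((t : ℂ) ^ 2) • ρ := by
      rw [← hLyap]
      simp only [Matrix.sub_mul, Matrix.mul_sub, smul_mul_assoc, mul_smul_comm, Matrix.one_mul,
        Matrix.mul_one, smul_sub, smul_add, smul_smul, pow_two]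
      abel
    rw [h3, Matrix.mul_add, Matrix.mul_sub, Matrix.trace_add, Matrix.trace_sub] at h2
    simp only [mul_smul_comm, Matrix.trace_smul, smul_eq_mul, ← Complex.ofReal_pow,
      Complex.add_re, Complex.sub_re, Complex.re_ofReal_mul] at h2
    have h4 : (2 * (E x * G).trace).re = 2 * ((E x * G).trace).re := by simp
    rw [h4] at h2
    linarith
  refine ⟨fun x => ?_, hpos, ?_⟩
  · have h : star (E x * G).trace = (E x * G).trace := by
      rw [← Matrix.trace_conjTranspose, Matrix.conjTranspose_mul, hG.eq, (hE x).1.eq,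
        Matrix.trace_mul_comm]
    exact Complex.conj_eq_iff_im.mp h
  · have hGL : (G * L).trace = (L * ρ * L).trace := by
      have h := congrArg (fun M => (M * L).trace) hLyap
      simp only [Matrix.add_mul, Matrix.trace_add, smul_mul_assoc, Matrix.trace_smul,
        smul_eq_mul] at h
      rw [Matrix.trace_mul_comm (ρ * L) L, ← Matrix.mul_assoc] at h
      linear_combination (-1 / 2 : ℂ) * h
    have hs : ((G * L).trace).re = ∑ x, ((E x * (L * ρ * L)).trace).re := by
      rw [hGL, ← Complex.re_sum, ← Matrix.trace_sum, ← Finset.sum_mul, hsum, Matrix.one_mul]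
    rw [hs]
    refine le_trans (Finset.sum_le_sum fun x hx => ?_)
      (Finset.sum_le_sum_of_subset_of_nonneg (Finset.filter_subset _ _) fun x _ _ => hq x)
    have hp := hpos x (Finset.mem_filter.mp hx).2
    have h := hquad x (((E x * G).trace).re / ((E x * ρ).trace).re)
    have e : ∀ a g p : ℝ, 0 < p → a - 2 * (g / p) * g + (g / p) ^ 2 * p = a - g ^ 2 / p := by
      intro a g p hp
      field_simp
      ring
    rw [e _ _ _ hp] at h
    linarith
end

section
/- Let 0 < d < 1 and θ_i, θ_j, θ_k ∈ ℝ. Define the 2×2 complex matrices ρ_i = (I + d·cos θ_i·σ_x + d·sin θ_i·σ_y)/2 and, for any angle θ, G_θ = (−d·sin θ·σ_x + d·cos θ·σ_y)/2, where σ_x = [[0,1],[1,0]] and σ_y = [[0,−i],[i,0]]. Let L be the unique Hermitian 2×2 matrix with ρ_i L + L ρ_i = 2·G_{θ_k}. Then Tr[G_{θ_j} · L] = d⁴·sin(θ_i−θ_j)·sin(θ_i−θ_k)/(1−d²) + d²·cos(θ_j−θ_k). -/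
open Matrix

/-- **Quantum information matrix entry for the noisy qubit model.**
With `ρ_i = (I + d cos θ_i σ_x + d sin θ_i σ_y)/2` (positive definite since `0 < d < 1`),
`G_θ = (−d sin θ σ_x + d cos θ σ_y)/2`, and `L` the unique Hermitian solution of
`ρ_i L + L ρ_i = 2 G_{θ_k}`, one has
`Tr[G_{θ_j} L] = d⁴ sin(θ_i−θ_j) sin(θ_i−θ_k)/(1−d²) + d² cos(θ_j−θ_k)`. -/
theorem qubit_quantum_information_entry
    (d θi θj θk : ℝ) (hd0 : 0 < d) (hd1 : d < 1)
    (σx σy : Matrix (Fin 2) (Fin 2) ℂ)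
    (hσx : σx = !![0, 1; 1, 0])
    (hσy : σy = !![0, -Complex.I; Complex.I, 0])
    (ρi : Matrix (Fin 2) (Fin 2) ℂ)
    (hρi : ρi = ((1 : ℂ)/2) • ((1 : Matrix (Fin 2) (Fin 2) ℂ)
        + ((d * Real.cos θi : ℝ) : ℂ) • σx + ((d * Real.sin θi : ℝ) : ℂ) • σy))
    (G : ℝ → Matrix (Fin 2) (Fin 2) ℂ)
    (hG : ∀ θ : ℝ, G θ = ((-(d * Real.sin θ) / 2 : ℝ) : ℂ) • σx
        + ((d * Real.cos θ / 2 : ℝ) : ℂ) • σy)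
    (L : Matrix (Fin 2) (Fin 2) ℂ) (hL : L.IsHermitian)
    (hLyap : ρi * L + L * ρi = (2 : ℂ) • G θk) :
    (G θj * L).trace =
      ((d ^ 4 * Real.sin (θi - θj) * Real.sin (θi - θk) / (1 - d ^ 2)
          + d ^ 2 * Real.cos (θj - θk) : ℝ) : ℂ) := by
  have h00 := congrFun (congrFun hLyap 0) 0
  have h01 := congrFun (congrFun hLyap 0) 1
  have h10 := congrFun (congrFun hLyap 1) 0
  have h11 := congrFun (congrFun hLyap 1) 1
  have hne : (1 - (d : ℂ) ^ 2) ≠ 0 := by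
    have h : (1 - d ^ 2 : ℝ) ≠ 0 := by nlinarith
    exact_mod_cast h
  have hcs : Complex.sin (θi : ℂ) ^ 2 + Complex.cos (θi : ℂ) ^ 2 = 1 :=
    Complex.sin_sq_add_cos_sq _
  have hI : Complex.I ^ 2 = -1 := Complex.I_sq
  rw [Matrix.trace_fin_two]
  simp [hρi, hG, hσx, hσy, Matrix.mul_apply, Fin.sum_univ_two] at h00 h01 h10 h11 ⊢
  rw [Complex.sin_sub, Complex.sin_sub, Complex.cos_sub]
  generalize Complex.sin (θi : ℂ) = si at *
  generalize Complex.cos (θi : ℂ) = ci at *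
  generalize Complex.sin (θj : ℂ) = sj at *
  generalize Complex.cos (θj : ℂ) = cj at *
  generalize Complex.sin (θk : ℂ) = sk at *
  generalize Complex.cos (θk : ℂ) = ck at *
  generalize L 0 0 = p at *
  generalize L 0 1 = q at *
  generalize L 1 0 = s at *
  generalize L 1 1 = t at *
  generalize (d : ℂ) = D at *
  generalize Complex.I = I at *
  have hq : q = D * (-sk - I * ck) - D * (ci - I * si) * ((p + t) / 2) := by
    linear_combination h01
  have hs : s = D * (-sk + I * ck) - D * (ci + I * si) * ((p + t) / 2) := by
    linear_combination h10
  have hm : (1 - D ^ 2) * ((p + t) / 2) = - D ^ 2 * (si * ck - ci * sk) := by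
    linear_combination (h00 + h11) / 2 - D * (ci - I * si) / 2 * hs
      - D * (ci + I * si) / 2 * hq + D ^ 2 * si * ck * hI
      + (p + t) / 2 * D ^ 2 * (hcs - si ^ 2 * hI)
  have hm' : (p + t) / 2 = - D ^ 2 * (si * ck - ci * sk) / (1 - D ^ 2) := by
    rw [eq_div_iff hne]; linear_combination hm
  rw [hm'] at hq hs
  rw [hq, hs]
  field_simp
  linear_combination
    (-2 * D ^ 2 * (cj * ck * (1 - D ^ 2) + cj * si * D ^ 2 * (ck * si - sk * ci))) * hI
end

section
/- Let X be a finite set, h : X → ℝ, and for each x ∈ X let θ ↦ p(x,θ) be a nonnegative continuously differentiable function on ℝ with Σ_{x∈X} ∫_ℝ p(x,θ) dθ = 1. Let A : ℝ × ℝ → ℝ be continuously differentiable with ∂_{θ'} A(θ,θ') = −∂_θ A(θ,θ') for all (θ,θ'). Assume: (i) for each x and θ, A(θ,θ')·p(x,θ') → 0 as θ' → ±∞; (ii) for each x and θ', A(θ,θ')·(h(x)−θ) → 0 as θ → ±∞; (iii) ∫_ℝ A(θ,θ') dθ = 1 for every θ'; and (iv) all functions appearing in the following iterated integrals are integrable,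 so that the integrals converge absolutely and the order of integration may be exchanged. Then ∫_ℝ Σ_{x∈X} (h(x)−θ) · (∫_ℝ A(θ,θ') · ∂_{θ'}p(x,θ') dθ') dθ = 1. -/
open Finset MeasureTheory Filter Topology

/-- **Bayesian unit-correlation identity.**
For a joint density `p(x,θ)` of a finite outcome `x` and a continuous parameter `θ`, and a
Bayesian hierarchy kernel `A(θ,θ')` with `∂_{θ'}A = −∂_θ A`, decaying against `p` and against
the estimator error, and normalized by `∫ A(θ,θ') dθ = 1`, the correlation of the estimator
error with the Bayesian global score equals one:
`∫ Σ_x (h(x)−θ) (∫ A(θ,θ') ∂_{θ'}p(x,θ') dθ') dθ = 1`. -/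
theorem bayesian_unit_correlation
    {X : Type*} [Fintype X]
    (h : X → ℝ) (p : X → ℝ → ℝ)
    (hp_nonneg : ∀ x θ, 0 ≤ p x θ)
    (hp_smooth : ∀ x, ContDiff ℝ 1 (p x))
    (hp_int : ∀ x, Integrable (p x))
    (hp_norm : ∑ x : X, ∫ θ : ℝ, p x θ = 1)
    (A : ℝ → ℝ → ℝ)
    (hA_smooth : ContDiff ℝ 1 (fun q : ℝ × ℝ => A q.1 q.2))
    (hA_anti : ∀ θ θ', deriv (fun t => A θ t) θ' = - deriv (fun t => A t θ') θ)
    -- (i) decay of the kernel against the density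
    (hdecay₁ : ∀ x θ, Tendsto (fun θ' => A θ θ' * p x θ') atTop (𝓝 0) ∧
        Tendsto (fun θ' => A θ θ' * p x θ') atBot (𝓝 0))
    -- (ii) decay of the kernel against the estimator error
    (hdecay₂ : ∀ x θ', Tendsto (fun θ => A θ θ' * (h x - θ)) atTop (𝓝 0) ∧
        Tendsto (fun θ => A θ θ' * (h x - θ)) atBot (𝓝 0))
    -- (iii) normalization of the kernel
    (hA_norm : ∀ θ', ∫ θ : ℝ, A θ θ' = 1)
    -- (iv) absolute convergence of all iterated integrals involved
    (hint₁ : ∀ x θ, Integrable (fun θ' => A θ θ' * deriv (p x) θ'))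
    (hint₂ : ∀ x θ, Integrable (fun θ' => deriv (fun t => A t θ') θ * p x θ'))
    (hint₃ : ∀ x, Integrable (fun q : ℝ × ℝ => (h x - q.1) * (A q.1 q.2 * deriv (p x) q.2)))
    (hint₄ : ∀ x, Integrable (fun q : ℝ × ℝ =>
        (h x - q.1) * (deriv (fun t => A t q.2) q.1 * p x q.2)))
    (hint₅ : ∀ x, Integrable (fun θ => (h x - θ) * ∫ θ' : ℝ, A θ θ' * deriv (p x) θ'))
    (hint₆ : ∀ x θ', Integrable (fun θ => (h x - θ) * deriv (fun t => A t θ') θ))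
    (hint₇ : ∀ θ' : ℝ, Integrable (fun θ => A θ θ')) :
    ∫ θ : ℝ, ∑ x : X, (h x - θ) * ∫ θ' : ℝ, A θ θ' * deriv (p x) θ' = 1 := by
  have hA1 : ∀ θ θ', HasDerivAt (fun t => A t θ') (deriv (fun t => A t θ') θ) θ := by
    intro θ θ'
    have hd : Differentiable ℝ (fun t : ℝ => A t θ') :=
      (hA_smooth.differentiable one_ne_zero).comp
        (f := fun t : ℝ => (t, θ')) (by fun_prop)
    exact (hd θ).hasDerivAt
  have hA2 : ∀ θ θ', HasDerivAt (fun t => A θ t) (- deriv (fun t => A t θ') θ) θ' := by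
    intro θ θ'
    have hd : Differentiable ℝ (fun t : ℝ => A θ t) :=
      (hA_smooth.differentiable one_ne_zero).comp
        (f := fun t : ℝ => (θ, t)) (by fun_prop)
    rw [← hA_anti]
    exact (hd θ').hasDerivAt
  have hp' : ∀ x θ, HasDerivAt (p x) (deriv (p x) θ) θ := fun x θ =>
    ((hp_smooth x).differentiable one_ne_zero θ).hasDerivAt
  -- first integration by parts
  have ibp1 : ∀ x θ, ∫ θ' : ℝ, A θ θ' * deriv (p x) θ'
      = ∫ θ' : ℝ, deriv (fun t => A t θ') θ * p x θ' := by
    intro x θ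
    have hneg : Integrable (fun θ' => - deriv (fun t => A t θ') θ * p x θ') := by
      simp only [neg_mul]
      exact (hint₂ x θ).neg
    have key := integral_mul_deriv_eq_deriv_mul (u := fun t => A θ t) (v := p x)
      (u' := fun θ' => - deriv (fun t => A t θ') θ) (v' := deriv (p x))
      (fun θ' _ => hA2 θ θ') (fun θ' _ => hp' x θ') (hint₁ x θ) hneg
      (hdecay₁ x θ).2 (hdecay₁ x θ).1
    rw [key]
    simp only [neg_mul, integral_neg]
    ring
  -- second integration by parts
  have ibp2 : ∀ x θ', ∫ θ : ℝ, (h x - θ) * deriv (fun t => A t θ') θ = 1 := by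
    intro x θ'
    have hneg : Integrable (fun θ => (-1 : ℝ) * A θ θ') := (hint₇ θ').const_mul _
    have hb : Tendsto ((fun θ => h x - θ) * fun θ => A θ θ') atBot (𝓝 0) :=
      (hdecay₂ x θ').2.congr (fun θ => mul_comm _ _)
    have ht : Tendsto ((fun θ => h x - θ) * fun θ => A θ θ') atTop (𝓝 0) :=
      (hdecay₂ x θ').1.congr (fun θ => mul_comm _ _)
    have key := integral_mul_deriv_eq_deriv_mul (u := fun θ => h x - θ) (v := fun θ => A θ θ')
      (u' := fun _ => (-1 : ℝ)) (v' := fun θ => deriv (fun t => A t θ') θ)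
      (fun θ _ => (hasDerivAt_id θ).const_sub (h x)) (fun θ _ => hA1 θ θ') (hint₆ x θ') hneg hb ht
    rw [key, integral_const_mul, hA_norm]
    ring
  rw [integral_finsetSum _ (fun x _ => hint₅ x), ← hp_norm]
  refine Finset.sum_congr rfl fun x _ => ?_
  calc ∫ θ : ℝ, (h x - θ) * ∫ θ' : ℝ, A θ θ' * deriv (p x) θ'
      = ∫ θ : ℝ, ∫ θ' : ℝ, (h x - θ) * (deriv (fun t => A t θ') θ * p x θ') := by
        simp only [ibp1, integral_const_mul]
    _ = ∫ θ' : ℝ, ∫ θ : ℝ, (h x - θ) * (deriv (fun t => A t θ') θ * p x θ') :=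
        integral_integral_swap (hint₄ x)
    _ = ∫ θ' : ℝ, p x θ' := by
        simp only [← mul_assoc, integral_mul_const, ibp2, one_mul]
end

section
/- Under the hypotheses of the Bayesian unit-correlation identity, assume additionally that p(x,θ) > 0 for all x ∈ X and θ ∈ ℝ, and define the Bayesian mean-square error BMSE = ∫_ℝ Σ_{x∈X} p(x,θ)·(h(x)−θ)² dθ and the information functional I = ∫_ℝ Σ_{x∈X} (∫_ℝ A(θ,θ')·∂_{θ'}p(x,θ') dθ')² / p(x,θ) dθ, assuming both integrals converge. Then BMSE · I ≥ 1; in particular, if I > 0 then BMSE ≥ 1/I. -/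
open Finset MeasureTheory Filter Topology

/-- **Generalized Van Trees bound.**
Under the hypotheses of the Bayesian unit-correlation identity, assuming additionally
`p(x,θ) > 0`, the Bayesian mean-square error `BMSE = ∫ Σ_x p(x,θ)(h(x)−θ)² dθ` and the
information functional `I = ∫ Σ_x (∫ A(θ,θ') ∂_{θ'}p(x,θ') dθ')²/p(x,θ) dθ` satisfy
`BMSE · I ≥ 1`; in particular, if `I > 0` then `BMSE ≥ 1/I`. -/
theorem generalized_van_trees_bound
    {X : Type*} [Fintype X]
    (h : X → ℝ) (p : X → ℝ → ℝ)
    (hp_pos : ∀ x θ, 0 < p x θ)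
    (hp_smooth : ∀ x, ContDiff ℝ 1 (p x))
    (hp_int : ∀ x, Integrable (p x))
    (hp_norm : ∑ x : X, ∫ θ : ℝ, p x θ = 1)
    (A : ℝ → ℝ → ℝ)
    (hA_smooth : ContDiff ℝ 1 (fun q : ℝ × ℝ => A q.1 q.2))
    (hA_anti : ∀ θ θ', deriv (fun t => A θ t) θ' = - deriv (fun t => A t θ') θ)
    (hdecay₁ : ∀ x θ, Tendsto (fun θ' => A θ θ' * p x θ') atTop (𝓝 0) ∧
        Tendsto (fun θ' => A θ θ' * p x θ') atBot (𝓝 0))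
    (hdecay₂ : ∀ x θ', Tendsto (fun θ => A θ θ' * (h x - θ)) atTop (𝓝 0) ∧
        Tendsto (fun θ => A θ θ' * (h x - θ)) atBot (𝓝 0))
    (hA_norm : ∀ θ', ∫ θ : ℝ, A θ θ' = 1)
    (hint₁ : ∀ x θ, Integrable (fun θ' => A θ θ' * deriv (p x) θ'))
    (hint₂ : ∀ x θ, Integrable (fun θ' => deriv (fun t => A t θ') θ * p x θ'))
    (hint₃ : ∀ x, Integrable (fun q : ℝ × ℝ => (h x - q.1) * (A q.1 q.2 * deriv (p x) q.2)))
    (hint₄ : ∀ x, Integrable (fun q : ℝ × ℝ =>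
        (h x - q.1) * (deriv (fun t => A t q.2) q.1 * p x q.2)))
    (hint₅ : ∀ x, Integrable (fun θ => (h x - θ) * ∫ θ' : ℝ, A θ θ' * deriv (p x) θ'))
    (hint₆ : ∀ x θ', Integrable (fun θ => (h x - θ) * deriv (fun t => A t θ') θ))
    (hint₇ : ∀ θ' : ℝ, Integrable (fun θ => A θ θ'))
    (BMSE : ℝ)
    (hBMSE : BMSE = ∫ θ : ℝ, ∑ x : X, p x θ * (h x - θ) ^ 2)
    (hBMSE_int : Integrable (fun θ : ℝ => ∑ x : X, p x θ * (h x - θ) ^ 2))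
    (I : ℝ)
    (hI : I = ∫ θ : ℝ, ∑ x : X,
        (∫ θ' : ℝ, A θ θ' * deriv (p x) θ') ^ 2 / p x θ)
    (hI_int : Integrable (fun θ : ℝ => ∑ x : X,
        (∫ θ' : ℝ, A θ θ' * deriv (p x) θ') ^ 2 / p x θ)) :
    1 ≤ BMSE * I ∧ (0 < I → 1 / I ≤ BMSE) := by
  have hA1 : ∀ θ θ', HasDerivAt (fun t => A t θ') (deriv (fun t => A t θ') θ) θ := by
    intro θ θ'
    have hd : Differentiable ℝ (fun q : ℝ × ℝ => A q.1 q.2) :=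
      hA_smooth.differentiable one_ne_zero
    have h2 : Differentiable ℝ (fun t : ℝ => A t θ') :=
      hd.comp (differentiable_id.prodMk (differentiable_const θ'))
    exact (h2 θ).hasDerivAt
  have hA2 : ∀ θ θ', HasDerivAt (fun t => A θ t) (- deriv (fun t => A t θ') θ) θ' := by
    intro θ θ'
    have hd : Differentiable ℝ (fun q : ℝ × ℝ => A q.1 q.2) :=
      hA_smooth.differentiable one_ne_zero
    have h2 : Differentiable ℝ (fun t : ℝ => A θ t) :=
      hd.comp ((differentiable_const θ).prodMk differentiable_id)
    rw [← hA_anti]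
    exact (h2 θ').hasDerivAt
  have hp1 : ∀ x θ, HasDerivAt (p x) (deriv (p x) θ) θ := fun x θ =>
    ((hp_smooth x).differentiable one_ne_zero θ).hasDerivAt
  have step1 : ∀ x θ, ∫ θ' : ℝ, A θ θ' * deriv (p x) θ'
      = ∫ θ' : ℝ, deriv (fun t => A t θ') θ * p x θ' := by
    intro x θ
    have := integral_mul_deriv_eq_deriv_mul (u := fun t => A θ t) (v := p x)
      (u' := fun θ' => - deriv (fun t => A t θ') θ) (v' := deriv (p x)) (a' := 0) (b' := 0)
      (fun y _ => hA2 θ y) (fun y _ => hp1 x y) (hint₁ x θ)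
      (by simpa [Pi.mul_def] using (hint₂ x θ).neg)
      (hdecay₁ x θ).2 (hdecay₁ x θ).1
    rw [this]
    simp [integral_neg]
  have step2 : ∀ x θ', ∫ θ : ℝ, (h x - θ) * deriv (fun t => A t θ') θ = 1 := by
    intro x θ'
    have := integral_mul_deriv_eq_deriv_mul (u := fun t => h x - t) (v := fun t => A t θ')
      (u' := fun _ => -1) (v' := fun θ => deriv (fun t => A t θ') θ) (a' := 0) (b' := 0)
      (fun y _ => by simpa using (hasDerivAt_id y).const_sub (h x)) (fun y _ => hA1 y θ')
      (hint₆ x θ')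
      (by simpa [Pi.mul_def] using (hint₇ θ').neg)
      (by simpa [Pi.mul_def, mul_comm] using (hdecay₂ x θ').2)
      (by simpa [Pi.mul_def, mul_comm] using (hdecay₂ x θ').1)
    rw [this]
    simp [integral_neg, hA_norm]
  have step3 : ∀ x, ∫ θ : ℝ, (h x - θ) * ∫ θ' : ℝ, A θ θ' * deriv (p x) θ'
      = ∫ θ', p x θ' := by
    intro x
    simp_rw [step1, ← integral_const_mul]
    rw [integral_integral_swap (hint₄ x)]
    congr 1
    ext θ'
    simp_rw [← mul_assoc]
    rw [integral_mul_const, step2, one_mul]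
  have hone : ∫ θ : ℝ, ∑ x : X, (h x - θ) * ∫ θ' : ℝ, A θ θ' * deriv (p x) θ' = 1 := by
    rw [integral_finsetSum _ (fun x _ => hint₅ x), ← hp_norm]
    exact Finset.sum_congr rfl (fun x _ => step3 x)
  have hS_int : Integrable
      (fun θ : ℝ => ∑ x : X, (h x - θ) * ∫ θ' : ℝ, A θ θ' * deriv (p x) θ') :=
    integrable_finsetSum _ (fun x _ => hint₅ x)
  have key : ∀ t : ℝ, 0 ≤ BMSE * (t * t) + (-2) * t + I := by
    intro t
    have e : BMSE * (t * t) + (-2) * t + I = ∫ θ : ℝ,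
        ((t * t) * (∑ x : X, p x θ * (h x - θ) ^ 2)
        + (-2 * t) * (∑ x : X, (h x - θ) * ∫ θ' : ℝ, A θ θ' * deriv (p x) θ')
        + ∑ x : X, (∫ θ' : ℝ, A θ θ' * deriv (p x) θ') ^ 2 / p x θ) := by
      have hadd : Integrable (fun θ : ℝ => (t * t) * (∑ x : X, p x θ * (h x - θ) ^ 2)
          + (-2 * t) * (∑ x : X, (h x - θ) * ∫ θ' : ℝ, A θ θ' * deriv (p x) θ')) :=
        (hBMSE_int.const_mul _).add (hS_int.const_mul _)
      rw [integral_add hadd hI_int,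
        integral_add (hBMSE_int.const_mul _) (hS_int.const_mul _),
        integral_const_mul, integral_const_mul, hone, ← hBMSE, ← hI]
      ring
    rw [e]
    refine integral_nonneg fun θ => ?_
    simp only [Pi.zero_apply]
    rw [Finset.mul_sum, Finset.mul_sum, ← Finset.sum_add_distrib, ← Finset.sum_add_distrib]
    refine Finset.sum_nonneg fun x _ => ?_
    generalize (∫ θ' : ℝ, A θ θ' * deriv (p x) θ') = g
    have hpos := hp_pos x θ
    have : t * t * (p x θ * (h x - θ) ^ 2) + -2 * t * ((h x - θ) * g) + g ^ 2 / p x θ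
        = (t * p x θ * (h x - θ) - g) ^ 2 / p x θ := by
      field_simp
      ring
    rw [this]
    positivity
  have hmain : 1 ≤ BMSE * I := by
    have := discrim_le_zero key
    unfold discrim at this
    linarith
  exact ⟨hmain, fun hIpos => (div_le_iff₀ hIpos).2 hmain⟩
end
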